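/- arXiv:1511.09189 — 2 statements merged into one kernel-verified Lean document; each statement's English description precedes it below -/
import Mathlib

section
/- Let f : (0,∞) → ℝ be a matrix entropy and let Φ be a map on n×n matrices of the form Φ(x) = Σᵢ pᵢ uᵢ* x uᵢ, where u₁,…,u_m are unitary n×n matrices and p₁,…,p_m are non-negative real weights summing to one. Then for every positive definite n×n matrix x and every n×n matrix h, Tr( Φ(h)* · Df'(Φ(x)) Φ(h) ) ≤ Tr( h* · Df'(x) h ). -/
open Matrix
open scoped ComplexOrder

attribute [local instance] Matrix.normedAddCommGroup Matrix.normedSpace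

/-- The matrix function induced by `f : ℝ → ℝ` via the functional calculus
(defined to be `0` on non-Hermitian matrices). -/
noncomputable def matFun {m : Type*} [Fintype m] [DecidableEq m] (f : ℝ → ℝ)
    (x : Matrix m m ℂ) : Matrix m m ℂ :=
  if hx : x.IsHermitian then
    (hx.eigenvectorUnitary : Matrix m m ℂ) *
      Matrix.diagonal (fun i => (f (hx.eigenvalues i) : ℂ)) *
      star (hx.eigenvectorUnitary : Matrix m m ℂ)
  else 0

/-- `D` is the (complex-linear extension of the) Fréchet differential at `x` of the matrix
function induced by `f`, the differential being taken within the real subspace of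
Hermitian matrices. -/
noncomputable def IsFDerivMatFun {m : Type*} [Fintype m] [DecidableEq m] (f : ℝ → ℝ)
    (x : Matrix m m ℂ) (D : Matrix m m ℂ →L[ℂ] Matrix m m ℂ) : Prop :=
  HasFDerivWithinAt (matFun f) (D.restrictScalars ℝ) {y : Matrix m m ℂ | y.IsHermitian} x

/-- `f : (0,∞) → ℝ` (given together with its derivative `f'`) is a matrix entropy:
it is twice continuously differentiable and for every `n` the map
`(x, h) ↦ Tr (h* ⬝ (Df' x) h)` is jointly convex in pairs `(x, h)` of an `n × n`
positive definite matrix `x` and an arbitrary `n × n` matrix `h`. -/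
noncomputable def IsMatrixEntropy (f f' : ℝ → ℝ) : Prop :=
  ContDiffOn ℝ 2 f (Set.Ioi 0) ∧
  (∀ t ∈ Set.Ioi (0 : ℝ), HasDerivAt f (f' t) t) ∧
  ∀ (n : ℕ)
    (D : Matrix (Fin n) (Fin n) ℂ → (Matrix (Fin n) (Fin n) ℂ →L[ℂ] Matrix (Fin n) (Fin n) ℂ)),
    (∀ x : Matrix (Fin n) (Fin n) ℂ, x.PosDef → IsFDerivMatFun f' x (D x)) →
    ConvexOn ℝ {q : Matrix (Fin n) (Fin n) ℂ × Matrix (Fin n) (Fin n) ℂ | q.1.PosDef}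
      (fun q => (Matrix.trace (q.2ᴴ * (D q.1) q.2)).re)

/-- The partial trace over the second tensor factor. -/
noncomputable def ptrace {ι₁ ι₂ : Type*} [Fintype ι₂]
    (ρ : Matrix (ι₁ × ι₂) (ι₁ × ι₂) ℂ) : Matrix ι₁ ι₁ ℂ :=
  Matrix.of fun i j => ∑ k : ι₂, ρ (i, k) (j, k)

/-!
Write `E (x, h) = Tr (h* ⬝ Df'(x) h)`. Conjugation by a unitary commutes with the functional
calculus, hence with its differential, so `E (u* x u, u* h u) = E (x, h)`. Since
`(Φ x, Φ h)` is the convex combination of the pairs `(uᵢ* x uᵢ, uᵢ* h uᵢ)`, Jensen's inequality for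
the jointly convex function `E` gives `E (Φ x, Φ h) ≤ ∑ pᵢ E (uᵢ* x uᵢ, uᵢ* h uᵢ) = E (x, h)`.

Joint convexity is only available once `Df'(x)` is known to exist at every positive definite `x`.
If `x` has spectral projections `P t`, then
`f'(y) - f'(x) = ∑ (f'(y) - f'(t)) (P t) = ∑ (f'[·, t])(y) (y - x) (P t)`,
where `f'[s, t]` is the divided difference. Continuity of the functional calculus at `y = x` then
shows that the differential exists and equals `h ↦ ∑ (f'[·, t])(x) h (P t)`.
-/

open Filter Topology

section HasFDerivWithinAt

theorem hasFDerivWithinAt_of_eventually_sub_eq {𝕜 E F : Type*} [NontriviallyNormedField 𝕜]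
    [NormedAddCommGroup E] [NormedSpace 𝕜 E] [NormedAddCommGroup F] [NormedSpace 𝕜 F]
    {f : E → F} {φ : E → E →L[𝕜] F} {s : Set E} {a : E} (hφ : ContinuousWithinAt φ s a)
    (hf : ∀ᶠ y in 𝓝[s] a, f y - f a = φ y (y - a)) : HasFDerivWithinAt f (φ a) s a := by
  refine .of_isLittleO ?_
  have hφ₀ : (fun y ↦ φ y - φ a) =o[𝓝[s] a] fun _ ↦ (1 : ℝ) :=
    (Asymptotics.isLittleO_one_iff ℝ).2 (tendsto_sub_nhds_zero_iff.2 hφ)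
  have hmul : (fun y ↦ ‖φ y - φ a‖ * ‖y - a‖) =o[𝓝[s] a] fun y ↦ y - a := by
    simpa using hφ₀.norm_left.mul_isBigO (Asymptotics.isBigO_refl (fun y ↦ ‖y - a‖) (𝓝[s] a))
  refine Asymptotics.IsBigO.trans_isLittleO (.of_norm_eventuallyLE ?_) hmul
  filter_upwards [hf] with y hy
  rw [hy, ← _root_.sub_apply]
  exact (φ y - φ a).le_opNorm (y - a)

theorem eq_of_hasFDerivWithinAt_isSelfAdjoint {E F : Type*}
    [NormedAddCommGroup E] [NormedSpace ℂ E] [StarAddMonoid E] [StarModule ℂ E]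
    [NormedAddCommGroup F] [NormedSpace ℂ F] {f : E → F} {a : E} {D D' : E →L[ℂ] F}
    (ha : IsSelfAdjoint a)
    (hD : HasFDerivWithinAt f (D.restrictScalars ℝ) {y | IsSelfAdjoint y} a)
    (hD' : HasFDerivWithinAt f (D'.restrictScalars ℝ) {y | IsSelfAdjoint y} a) : D = D' := by
  refine ContinuousLinearMap.coe_injective (LinearMap.ext_on span_selfAdjoint fun h hh ↦ ?_)
  have hconv : Convex ℝ {y : E | IsSelfAdjoint y} := (selfAdjoint.submodule ℝ E).convex
  have htangent : h ∈ tangentConeAt ℝ {y | IsSelfAdjoint y} a := by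
    simpa using mem_tangentConeAt_of_segment_subset (hconv.segment_subset ha (ha.add hh))
  exact hD.unique_on hD' htangent

end HasFDerivWithinAt

theorem isSelfAdjoint_map_iff {F R S : Type*} [Star R] [Star S] [EquivLike F R S]
    [StarHomClass F R S] (e : F) {x : R} : IsSelfAdjoint (e x) ↔ IsSelfAdjoint x := by
  rw [IsSelfAdjoint, ← map_star, EmbeddingLike.apply_eq_iff_eq, IsSelfAdjoint]

section FunctionalCalculus

variable {𝕜 A : Type*} {p : A → Prop} [RCLike 𝕜] [TopologicalSpace A] [Ring A] [StarRing A]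
  [Algebra 𝕜 A] [ContinuousFunctionalCalculus 𝕜 A p] {a b : A} {g : 𝕜 → 𝕜} {t : 𝕜}

theorem cfc_sub_algebraMap (ha : p a) (hg : ContinuousOn (dslope g t) (spectrum 𝕜 a)) :
    cfc g a - algebraMap 𝕜 A (g t) = cfc (dslope g t) a * (a - algebraMap 𝕜 A t) := by
  have hg' : ContinuousOn g (spectrum 𝕜 a) := hg.of_dslope
  calc cfc g a - algebraMap 𝕜 A (g t)
      = cfc (fun r ↦ g r - g t) a := by rw [cfc_sub g _ a, cfc_const (g t) a]
    _ = cfc (fun r ↦ dslope g t r * (r - t)) a := by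
      refine congrArg (cfc · a) (funext fun r ↦ ?_)
      rw [mul_comm, ← smul_eq_mul, sub_smul_dslope]
    _ = cfc (dslope g t) a * (a - algebraMap 𝕜 A t) := by
      rw [cfc_mul _ _ a, cfc_sub _ _ a, cfc_id' 𝕜 a, cfc_const t a]

/-- The spectral projection of `a` at the point `t` of its spectrum. It is meant for isolated
points `t`: otherwise the indicator function of `{t}` is not continuous on the spectrum and `cfc`
takes the junk value `0`. -/
noncomputable def spectralProjection (a : A) (t : 𝕜) : A :=
  cfc (Set.indicator {t} 1) a

theorem sum_spectralProjection (ha : p a) (hfin : (spectrum 𝕜 a).Finite) :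
    ∑ t ∈ hfin.toFinset, spectralProjection a t = 1 := by
  simp_rw [spectralProjection]
  rw [← cfc_sum _ a _ fun _ _ ↦ hfin.continuousOn _, ← cfc_one 𝕜 a]
  refine cfc_congr fun r hr ↦ ?_
  simp [hr]

theorem cfc_mul_spectralProjection (hfin : (spectrum 𝕜 a).Finite) :
    cfc g a * spectralProjection a t = g t • spectralProjection a t := by
  have hg (g : 𝕜 → 𝕜) : ContinuousOn g (spectrum 𝕜 a) := hfin.continuousOn g
  rw [spectralProjection, ← cfc_mul _ _ a (hg _) (hg _), ← cfc_const_mul _ _ a (hg _)]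
  congr 1 with r
  by_cases hr : r = t <;> simp [hr]

theorem mul_spectralProjection (ha : p a) (hfin : (spectrum 𝕜 a).Finite) :
    a * spectralProjection a t = t • spectralProjection a t := by
  simpa only [cfc_id' 𝕜 a] using cfc_mul_spectralProjection (g := fun r ↦ r) (t := t) hfin

theorem cfc_sub_cfc_eq_sum (ha : p a) (hb : p b) (hfin : (spectrum 𝕜 a).Finite)
    (hg : ∀ t ∈ spectrum 𝕜 a, ContinuousOn (dslope g t) (spectrum 𝕜 b)) :
    cfc g b - cfc g a =
      ∑ t ∈ hfin.toFinset, cfc (dslope g t) b * (b - a) * spectralProjection a t := by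
  calc cfc g b - cfc g a
      = ∑ t ∈ hfin.toFinset, (cfc g b - cfc g a) * spectralProjection a t := by
        rw [← Finset.mul_sum, sum_spectralProjection ha, mul_one]
    _ = ∑ t ∈ hfin.toFinset, (cfc g b - algebraMap 𝕜 A (g t)) * spectralProjection a t := by
        simp_rw [sub_mul, cfc_mul_spectralProjection hfin, Algebra.smul_def]
    _ = ∑ t ∈ hfin.toFinset,
          cfc (dslope g t) b * (b - algebraMap 𝕜 A t) * spectralProjection a t :=
        Finset.sum_congr rfl fun t ht ↦ by
          rw [cfc_sub_algebraMap hb (hg t (hfin.mem_toFinset.1 ht))]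
    _ = ∑ t ∈ hfin.toFinset, cfc (dslope g t) b * (b - a) * spectralProjection a t := by
        simp_rw [mul_assoc, sub_mul, mul_spectralProjection ha hfin, Algebra.smul_def]

end FunctionalCalculus

section Differential

variable {𝕜 A : Type*} {p : A → Prop} [RCLike 𝕜] [NormedRing A] [StarRing A] [ContinuousStar A]
  [CompleteSpace A] [NormedAlgebra 𝕜 A] [IsometricContinuousFunctionalCalculus 𝕜 A p] {a : A}
  {g : 𝕜 → 𝕜} {s : Set 𝕜}

theorem continuousWithinAt_cfc_of_mem_nhdsSet (hs : s ∈ 𝓝ˢ (spectrum 𝕜 a))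
    (hg : ContinuousOn g s) (ha : p a) :
    ContinuousWithinAt (cfc g : A → A) {b | p b} a := by
  have hcont : ContinuousOn (cfc g : A → A) {b | p b ∧ s ∈ 𝓝ˢ (spectrum 𝕜 b)} :=
    ContinuousOn.cfc_of_mem_nhdsSet g (a := id)
      (by simpa only [nhdsSet_iUnion, mem_iSup] using fun b hb ↦ hb.2)
      continuousOn_id (fun b hb ↦ hb.1) hg
  have hopen : {b : A | s ∈ 𝓝ˢ (spectrum 𝕜 b)} ∈ 𝓝 a :=
    ((upperHemicontinuous_spectrum 𝕜 A).isOpen s).mem_nhds hs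
  exact (continuousWithinAt_inter hopen).1 (hcont a ⟨ha, hs⟩)

theorem hasFDerivWithinAt_cfc (ha : p a) (hfin : (spectrum 𝕜 a).Finite)
    (hs : s ∈ 𝓝ˢ (spectrum 𝕜 a)) (hg : ContinuousOn g s)
    (hg' : ∀ t ∈ spectrum 𝕜 a, DifferentiableAt 𝕜 g t) :
    HasFDerivWithinAt (cfc g : A → A)
      (∑ t ∈ hfin.toFinset, ContinuousLinearMap.mulLeftRight 𝕜 A (cfc (dslope g t) a)
        (spectralProjection a t)) {b | p b} a := by
  have hslope : ∀ t ∈ spectrum 𝕜 a, ContinuousOn (dslope g t) s := fun t ht ↦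
    (continuousOn_dslope (mem_nhdsSet_iff_forall.1 hs t ht)).2 ⟨hg, hg' t ht⟩
  have hspec : ∀ᶠ b in 𝓝 a, spectrum 𝕜 b ⊆ s :=
    ((upperHemicontinuous_spectrum 𝕜 A).upperHemicontinuousAt a s hs).mono
      fun _ ↦ subset_of_mem_nhdsSet
  refine hasFDerivWithinAt_of_eventually_sub_eq
    (φ := fun b ↦ ∑ t ∈ hfin.toFinset, ContinuousLinearMap.mulLeftRight 𝕜 A (cfc (dslope g t) b)
      (spectralProjection a t)) ?_ ?_
  · refine tendsto_finsetSum _ fun t ht ↦ ?_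
    have hcont := continuousWithinAt_cfc_of_mem_nhdsSet hs
      (hslope t (hfin.mem_toFinset.1 ht)) ha
    exact ((ContinuousLinearMap.mulLeftRight 𝕜 A).continuous.continuousAt.comp_continuousWithinAt
      hcont).clm_apply continuousWithinAt_const
  · filter_upwards [self_mem_nhdsWithin, nhdsWithin_le_nhds hspec] with b hb hbs
    rw [cfc_sub_cfc_eq_sum ha hb hfin fun t ht ↦ (hslope t ht).mono hbs]
    simp

end Differential

section Matrix

variable {m n : Type*} [Fintype m] [Fintype n] {g : ℝ → ℝ} {x : Matrix m m ℂ}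
  (e : Matrix m m ℂ ≃⋆ₐ[ℂ] Matrix n n ℂ)

theorem posDef_iff_spectrum_subset_Ioi [DecidableEq m] (hx : x.IsHermitian) :
    x.PosDef ↔ spectrum ℝ x ⊆ Set.Ioi 0 := by
  rw [hx.posDef_iff_eigenvalues_pos, hx.spectrum_real_eq_range_eigenvalues, Set.range_subset_iff]
  rfl

theorem posDef_starAlgEquiv_iff : (e x).PosDef ↔ x.PosDef := by
  classical
  have hspec : spectrum ℝ (e x) = spectrum ℝ x :=
    AlgEquiv.spectrum_eq (e.toAlgEquiv.restrictScalars ℝ) x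
  have hself : (e x).IsHermitian ↔ x.IsHermitian := isSelfAdjoint_map_iff e
  refine ⟨fun h ↦ ?_, fun h ↦ ?_⟩
  · rwa [posDef_iff_spectrum_subset_Ioi (hself.1 h.1), ← hspec,
      ← posDef_iff_spectrum_subset_Ioi h.1]
  · rwa [posDef_iff_spectrum_subset_Ioi (hself.2 h.1), hspec,
      ← posDef_iff_spectrum_subset_Ioi h.1]

variable [DecidableEq m] [DecidableEq n]

theorem matFun_eq_cfc (g : ℝ → ℝ) (x : Matrix m m ℂ) : matFun g x = cfc g x := by
  by_cases hx : x.IsHermitian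
  · rw [hx.cfc_eq, matFun, dif_pos hx, Matrix.IsHermitian.cfc, Unitary.conjStarAlgAut_apply]
    rfl
  · rw [matFun, dif_neg hx, cfc_apply_of_not_predicate (p := IsSelfAdjoint) x hx]

namespace IsFDerivMatFun

open scoped Matrix.Norms.L2Operator in
theorem exists_of_posDef (hg : ∀ t, 0 < t → DifferentiableAt ℝ g t) (hx : x.PosDef) :
    ∃ D, IsFDerivMatFun g x D := by
  have hpos : spectrum ℝ x ⊆ Set.Ioi 0 := (posDef_iff_spectrum_subset_Ioi hx.1).1 hx
  have hcfc := hasFDerivWithinAt_cfc hx.1 x.finite_real_spectrum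
    (isOpen_Ioi.mem_nhdsSet.2 hpos) (fun t ht ↦ (hg t ht).continuousAt.continuousWithinAt)
    fun t ht ↦ hg t (hpos ht)
  have hrestrict : ∑ t ∈ x.finite_real_spectrum.toFinset,
        ContinuousLinearMap.mulLeftRight ℝ (Matrix m m ℂ) (cfc (dslope g t) x)
          (spectralProjection x t) =
      (∑ t ∈ x.finite_real_spectrum.toFinset,
        ContinuousLinearMap.mulLeftRight ℂ (Matrix m m ℂ) (cfc (dslope g t) x)
          (spectralProjection x t)).restrictScalars ℝ := by
    ext1 h
    simp
  -- The topology of the `L²` operator norm is definitionally the entrywise one.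
  exact ⟨_, (hcfc.congr_fderiv hrestrict).congr (fun y _ ↦ matFun_eq_cfc g y) (matFun_eq_cfc g x)⟩

theorem unique {D D' : Matrix m m ℂ →L[ℂ] Matrix m m ℂ} (hx : x.IsHermitian)
    (hD : IsFDerivMatFun g x D) (hD' : IsFDerivMatFun g x D') : D = D' :=
  eq_of_hasFDerivWithinAt_isSelfAdjoint hx hD hD'

end IsFDerivMatFun

theorem matFun_starAlgEquiv (g : ℝ → ℝ) (x : Matrix m m ℂ) : matFun g (e x) = e (matFun g x) := by
  rw [matFun_eq_cfc, matFun_eq_cfc]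
  by_cases hx : IsSelfAdjoint x
  · exact (StarAlgHomClass.map_cfc (S := ℂ) e g x (x.finite_real_spectrum.continuousOn g)
      (LinearMap.continuous_of_finiteDimensional e.toAlgEquiv.toLinearMap) hx (hx.map e)).symm
  · rw [cfc_apply_of_not_predicate x hx, map_zero,
      cfc_apply_of_not_predicate _ (mt (isSelfAdjoint_map_iff e).1 hx)]

theorem IsFDerivMatFun.apply_starAlgEquiv {D : Matrix m m ℂ →L[ℂ] Matrix m m ℂ}
    {D' : Matrix n n ℂ →L[ℂ] Matrix n n ℂ} (hx : x.IsHermitian) (hD : IsFDerivMatFun g x D)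
    (hD' : IsFDerivMatFun g (e x) D') (h : Matrix m m ℂ) : D' (e h) = e (D h) := by
  let L : Matrix m m ℂ →L[ℂ] Matrix n n ℂ := e.toAlgEquiv.toLinearMap.toContinuousLinearMap
  have hL (s : Set (Matrix m m ℂ)) (y : Matrix m m ℂ) :
      HasFDerivWithinAt e (L.restrictScalars ℝ) s y := (L.restrictScalars ℝ).hasFDerivWithinAt
  have hleft : HasFDerivWithinAt (matFun g ∘ e) ((D' ∘L L).restrictScalars ℝ)
      {y | IsSelfAdjoint y} x :=
    HasFDerivWithinAt.comp x hD' (hL _ x) fun y hy ↦ hy.map e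
  have hright : HasFDerivWithinAt (e ∘ matFun g) ((L ∘L D).restrictScalars ℝ)
      {y | IsSelfAdjoint y} x :=
    HasFDerivWithinAt.comp x (hL _ _) hD (Set.mapsTo_univ _ _)
  have hcomm : matFun g ∘ e = e ∘ matFun g := funext (matFun_starAlgEquiv e g)
  exact DFunLike.congr_fun (eq_of_hasFDerivWithinAt_isSelfAdjoint hx hleft (hcomm ▸ hright)) h

theorem IsFDerivMatFun.trace_apply_starAlgEquiv {D : Matrix m m ℂ →L[ℂ] Matrix m m ℂ}
    {D' : Matrix n n ℂ →L[ℂ] Matrix n n ℂ} (hx : x.IsHermitian) (hD : IsFDerivMatFun g x D)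
    (hD' : IsFDerivMatFun g (e x) D') (h : Matrix m m ℂ) :
    ((e h)ᴴ * D' (e h)).trace = (hᴴ * D h).trace := by
  rw [hD.apply_starAlgEquiv e hx hD', ← star_eq_conjTranspose, ← map_star, ← map_mul,
    Matrix.trace_map, star_eq_conjTranspose]

end Matrix

namespace IsMatrixEntropy

variable {m : Type*} [Fintype m] [DecidableEq m] {f f' : ℝ → ℝ}

theorem differentiableAt {t : ℝ} (hf : IsMatrixEntropy f f') (ht : 0 < t) :
    DifferentiableAt ℝ f' t := by
  have hderiv : ContDiffOn ℝ 1 (deriv f) (Set.Ioi 0) :=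
    hf.1.deriv_of_isOpen isOpen_Ioi one_add_one_eq_two.le
  have hf' : ContDiffOn ℝ 1 f' (Set.Ioi 0) := hderiv.congr fun s hs ↦ (hf.2.1 s hs).deriv.symm
  exact (hf'.differentiableOn one_ne_zero).differentiableAt (Ioi_mem_nhds ht)

theorem exists_isFDerivMatFun (hf : IsMatrixEntropy f f') (m : Type*) [Fintype m]
    [DecidableEq m] : ∃ D : Matrix m m ℂ → Matrix m m ℂ →L[ℂ] Matrix m m ℂ,
      ∀ x : Matrix m m ℂ, x.PosDef → IsFDerivMatFun f' x (D x) := by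
  choose! D hD using fun (x : Matrix m m ℂ) (hx : x.PosDef) ↦
    IsFDerivMatFun.exists_of_posDef (fun _ ht ↦ hf.differentiableAt ht) hx
  exact ⟨D, hD⟩

theorem convexOn (hf : IsMatrixEntropy f f')
    {D : Matrix m m ℂ → Matrix m m ℂ →L[ℂ] Matrix m m ℂ}
    (hD : ∀ x : Matrix m m ℂ, x.PosDef → IsFDerivMatFun f' x (D x)) :
    ConvexOn ℝ {q : Matrix m m ℂ × Matrix m m ℂ | q.1.PosDef}
      fun q ↦ (q.2ᴴ * D q.1 q.2).trace.re := by
  let e : Matrix m m ℂ ≃⋆ₐ[ℂ] Matrix (Fin (Fintype.card m)) (Fin (Fintype.card m)) ℂ :=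
    .ofAlgEquiv (Matrix.reindexAlgEquiv ℂ ℂ (Fintype.equivFin m)) fun x ↦
      (Matrix.conjTranspose_reindex _ _ x).symm
  let L := (e.toAlgEquiv.toLinearMap.prodMap e.toAlgEquiv.toLinearMap).restrictScalars ℝ
  have hdom : L ⁻¹' {q | q.1.PosDef} = {q | q.1.PosDef} :=
    Set.ext fun _ ↦ posDef_starAlgEquiv_iff e
  obtain ⟨E, hE⟩ := hf.exists_isFDerivMatFun (Fin (Fintype.card m))
  have hconv := (hf.2.2 (Fintype.card m) E hE).comp_linearMap L
  rw [hdom] at hconv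
  refine hconv.congr fun q hq ↦ congrArg Complex.re ?_
  exact (hD q.1 hq).trace_apply_starAlgEquiv e hq.1 (hE _ ((posDef_starAlgEquiv_iff e).2 hq)) q.2

end IsMatrixEntropy

theorem matrixEntropy_conditional_expectation_contracts_general {m ι : Type*} [Fintype m]
    [DecidableEq m] [Fintype ι] {f f' : ℝ → ℝ} (hf : IsMatrixEntropy f f')
    (e : ι → Matrix m m ℂ ≃⋆ₐ[ℂ] Matrix m m ℂ)
    {p : ι → ℝ} (hp : ∀ i, 0 ≤ p i) (hp1 : ∑ i, p i = 1)
    {Φ : Matrix m m ℂ → Matrix m m ℂ} (hΦ : ∀ y, Φ y = ∑ i, (p i : ℂ) • e i y)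
    {x : Matrix m m ℂ} (hx : x.PosDef) (h : Matrix m m ℂ)
    {D DΦ : Matrix m m ℂ →L[ℂ] Matrix m m ℂ}
    (hD : IsFDerivMatFun f' x D) (hDΦ : IsFDerivMatFun f' (Φ x) DΦ) :
    ((Φ h)ᴴ * DΦ (Φ h)).trace.re ≤ (hᴴ * D h).trace.re := by
  obtain ⟨E, hE⟩ := hf.exists_isFDerivMatFun m
  have hconv := hf.convexOn hE
  have hpos (i : ι) : (e i x).PosDef := (posDef_starAlgEquiv_iff (e i)).2 hx
  have hΦ' : (Φ x, Φ h) = ∑ i, p i • (e i x, e i h) := by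
    simp only [hΦ, Complex.coe_smul, Prod.smul_mk, Prod.ext_iff, Prod.fst_sum, Prod.snd_sum,
      and_self]
  have hΦx : (Φ x).PosDef := by
    have hmem := hconv.1.sum_mem (t := .univ) (z := fun i ↦ (e i x, e i h))
      (fun i _ ↦ hp i) hp1 fun i _ ↦ hpos i
    rwa [← hΦ'] at hmem
  calc ((Φ h)ᴴ * DΦ (Φ h)).trace.re
      = ((Φ h)ᴴ * E (Φ x) (Φ h)).trace.re := by rw [hDΦ.unique hΦx.1 (hE _ hΦx)]
    _ ≤ ∑ i, p i • ((e i h)ᴴ * E (e i x) (e i h)).trace.re := by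
      have hjensen := hconv.map_sum_le (t := .univ) (p := fun i ↦ (e i x, e i h))
        (fun i _ ↦ hp i) hp1 fun i _ ↦ hpos i
      rwa [← hΦ'] at hjensen
    _ = ∑ i, p i • (hᴴ * D h).trace.re := by
      simp_rw [fun i ↦ hD.trace_apply_starAlgEquiv (e i) hx.1 (hE _ (hpos i)) h]
    _ = (hᴴ * D h).trace.re := by rw [← Finset.sum_smul, hp1, one_smul]

/-- If `f` is a matrix entropy and `Φ(x) = Σᵢ pᵢ uᵢ* x uᵢ` is a mixture of
unitary conjugations (a conditional expectation), then
`Tr (Φ(h)* ⬝ Df'(Φ(x)) Φ(h)) ≤ Tr (h* ⬝ Df'(x) h)` for positive definite `x` and arbitrary `h`. -/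
theorem matrixEntropy_conditional_expectation_contracts
    {n : ℕ} (f f' : ℝ → ℝ) (hf : IsMatrixEntropy f f')
    {k : ℕ} (u : Fin k → Matrix (Fin n) (Fin n) ℂ)
    (hu : ∀ i, u i ∈ Matrix.unitaryGroup (Fin n) ℂ)
    (p : Fin k → ℝ) (hp : ∀ i, 0 ≤ p i) (hp1 : ∑ i, p i = 1)
    (Φ : Matrix (Fin n) (Fin n) ℂ → Matrix (Fin n) (Fin n) ℂ)
    (hΦ : ∀ x, Φ x = ∑ i, (p i : ℂ) • ((u i)ᴴ * x * u i))
    (x : Matrix (Fin n) (Fin n) ℂ) (hx : x.PosDef)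
    (h : Matrix (Fin n) (Fin n) ℂ)
    (D DΦ : Matrix (Fin n) (Fin n) ℂ →L[ℂ] Matrix (Fin n) (Fin n) ℂ)
    (hD : IsFDerivMatFun f' x D) (hDΦ : IsFDerivMatFun f' (Φ x) DΦ) :
    (Matrix.trace ((Φ h)ᴴ * DΦ (Φ h))).re ≤ (Matrix.trace (hᴴ * D h)).re :=
  matrixEntropy_conditional_expectation_contracts_general hf
    (fun i ↦ Unitary.conjStarAlgAut ℂ _ (star ⟨u i, hu i⟩)) hp hp1
    (by simpa [Unitary.conjStarAlgAut_apply, star_eq_conjTranspose] using hΦ) hx h hD hDΦ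
end

section
/- Let H₁ and H₂ be finite-dimensional complex Hilbert spaces, H = H₁ ⊗ H₂, d₂ = dim H₂, and let p be a real number with 1 ≤ p ≤ 2. The function G(ρ) = d₂^{p−1} · Tr₁₂(ρ^p) − Tr₁(ρ₁^p) is convex on the set of positive definite operators ρ on H, where ρ₁ = Tr₂ ρ is the partial trace of ρ over H₂ and ρ^p is defined by the functional calculus. -/
open Matrix
open scoped ComplexOrder

attribute [local instance] Matrix.normedAddCommGroup Matrix.normedSpace

/-!
The Fréchet derivative of `x ↦ Tr x ^ p` is `h ↦ p Tr (x ^ (p - 1) h)`. With `q = p - 1`,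
convexity of `G` therefore amounts to the monotonicity of its gradient,
`Tr (ρ₁ ^ q - σ₁ ^ q) (ρ₁ - σ₁) ≤ d₂ ^ q Tr (ρ ^ q - σ ^ q) (ρ - σ)`.
In the eigenbases of `ρ, σ` and of `ρ₁, σ₁` both sides are weighted sums of squares, the weights
being slopes `(t ^ q - s ^ q) / (t - s)`, so this is a weighted `ℓ²` bound for the partial trace.
By duality it is a bound for its adjoint `k ↦ k ⊗ 1` with the reciprocal slopes as weights, and
these are `q⁻¹ ∫ θ in 0..1, (θ t ^ q + (1 - θ) s ^ q) ^ (1 / q - 1)`.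
The map `k ↦ k ⊗ 1` is bounded by `d₂` for the weights `1` and by `1` for the weights `s` and `t`.
Weights with such a bound are closed under sums, hence integrals, and, by the Stein–Weiss theorem,
under geometric interpolation; this reaches the reciprocal slopes with the constant `d₂ ^ q`.
-/

section Interpolation

/-- A zero-free entire function of `z` with squared modulus `x ^ (1 - re z) * y ^ re z`, written
with `exp` rather than `cpow` to make both properties immediate. -/
noncomputable def interpWeight (x y : ℝ) (z : ℂ) : ℂ :=
  Complex.exp (((1 - z) * Real.log x + z * Real.log y) / 2)

lemma interpWeight_ne_zero (x y : ℝ) (z : ℂ) : interpWeight x y z ≠ 0 :=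
  Complex.exp_ne_zero _

lemma differentiable_interpWeight (x y : ℝ) : Differentiable ℂ (interpWeight x y) := by
  unfold interpWeight
  fun_prop

lemma interpWeight_inv_inv (x y : ℝ) (z : ℂ) :
    interpWeight x⁻¹ y⁻¹ z = (interpWeight x y z)⁻¹ := by
  rw [interpWeight, interpWeight, ← Complex.exp_neg]
  congr 1
  simp only [Real.log_inv]
  push_cast
  ring

lemma norm_interpWeight (x y : ℝ) (z : ℂ) :
    ‖interpWeight x y z‖ = Real.exp (((1 - z.re) * Real.log x + z.re * Real.log y) / 2) := by
  simp [interpWeight, Complex.norm_exp]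

lemma norm_interpWeight_sq {x y : ℝ} (hx : 0 < x) (hy : 0 < y) (z : ℂ) :
    ‖interpWeight x y z‖ ^ 2 = x ^ (1 - z.re) * y ^ z.re := by
  rw [norm_interpWeight, ← Real.exp_nat_mul, Real.rpow_def_of_pos hx, Real.rpow_def_of_pos hy,
    ← Real.exp_add]
  congr 1
  push_cast
  ring

lemma norm_interpWeight_le (x y : ℝ) {z : ℂ} (h0 : 0 ≤ z.re) (h1 : z.re ≤ 1) :
    ‖interpWeight x y z‖ ≤ Real.exp ((|Real.log x| + |Real.log y|) / 2) := by
  rw [norm_interpWeight]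
  gcongr
  · exact (mul_le_mul_of_nonneg_left (le_abs_self _) (sub_nonneg.2 h1)).trans
      (mul_le_of_le_one_left (abs_nonneg _) (by linarith))
  · exact (mul_le_mul_of_nonneg_left (le_abs_self _) h0).trans
      (mul_le_of_le_one_left (abs_nonneg _) h1)

variable {α β : Type*}

/-- The analytic family `z ↦ D_v(z) (T (D_u(z)⁻¹ x))`, where `D_u(z)` is multiplication by
`interpWeight u₀ u₁ z`: the subject of the three lines theorem in Stein's interpolation with
change of measure. -/
noncomputable def steinFamily (T : (α → ℂ) →ₗ[ℂ] (β → ℂ)) (u₀ u₁ : α → ℝ) (v₀ v₁ : β → ℝ)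
    (x : α → ℂ) (z : ℂ) : EuclideanSpace ℂ β :=
  WithLp.toLp 2 fun b => interpWeight (v₀ b) (v₁ b) z *
    T (fun a => (interpWeight (u₀ a) (u₁ a) z)⁻¹ * x a) b

lemma norm_steinFamily_sq [Fintype β] (T : (α → ℂ) →ₗ[ℂ] (β → ℂ)) (u₀ u₁ : α → ℝ) {v₀ v₁ : β → ℝ}
    (hv₀ : ∀ b, 0 < v₀ b) (hv₁ : ∀ b, 0 < v₁ b) (x : α → ℂ) (z : ℂ) :
    ‖steinFamily T u₀ u₁ v₀ v₁ x z‖ ^ 2 = ∑ b, (v₀ b ^ (1 - z.re) * v₁ b ^ z.re) *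
      ‖T (fun a => (interpWeight (u₀ a) (u₁ a) z)⁻¹ * x a) b‖ ^ 2 := by
  simp only [EuclideanSpace.norm_sq_eq, steinFamily, norm_mul, mul_pow,
    norm_interpWeight_sq (hv₀ _) (hv₁ _)]

lemma sum_mul_norm_inv_interpWeight_mul_sq [Fintype α] {u₀ u₁ : α → ℝ} (hu₀ : ∀ a, 0 < u₀ a)
    (hu₁ : ∀ a, 0 < u₁ a) (x : α → ℂ) (z : ℂ) :
    ∑ a, (u₀ a ^ (1 - z.re) * u₁ a ^ z.re) * ‖(interpWeight (u₀ a) (u₁ a) z)⁻¹ * x a‖ ^ 2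
      = ∑ a, ‖x a‖ ^ 2 := by
  refine Finset.sum_congr rfl fun a _ => ?_
  rw [norm_mul, norm_inv, mul_pow, inv_pow, ← norm_interpWeight_sq (hu₀ a) (hu₁ a)]
  exact mul_inv_cancel_left₀
    (pow_ne_zero 2 (norm_ne_zero_iff.2 (interpWeight_ne_zero _ _ _))) _

lemma differentiable_steinFamily [Finite α] [Finite β] (T : (α → ℂ) →ₗ[ℂ] (β → ℂ))
    (u₀ u₁ : α → ℝ) (v₀ v₁ : β → ℝ) (x : α → ℂ) :
    Differentiable ℂ (steinFamily T u₀ u₁ v₀ v₁ x) := by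
  cases nonempty_fintype α
  cases nonempty_fintype β
  refine differentiable_euclidean.2 fun b => (differentiable_interpWeight _ _).mul ?_
  refine differentiable_pi.1 (T.toContinuousLinearMap.differentiable.comp ?_) b
  exact differentiable_pi.2 fun a =>
    ((differentiable_interpWeight _ _).inv fun z => interpWeight_ne_zero _ _ z).mul_const _

lemma bddAbove_norm_steinFamily [Finite α] [Fintype β] (T : (α → ℂ) →ₗ[ℂ] (β → ℂ))
    (u₀ u₁ : α → ℝ) (v₀ v₁ : β → ℝ) (x : α → ℂ) : BddAbove ((norm ∘ steinFamily T u₀ u₁ v₀ v₁ x) ''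
      Complex.HadamardThreeLines.verticalClosedStrip 0 1) := by
  cases nonempty_fintype α
  let F (p : (β → ℂ) × (α → ℂ)) : EuclideanSpace ℂ β := WithLp.toLp 2 (p.1 * T (p.2 * x))
  let K : Set ((β → ℂ) × (α → ℂ)) :=
    (Set.univ.pi fun b => Metric.closedBall 0
      (Real.exp ((|Real.log (v₀ b)| + |Real.log (v₁ b)|) / 2))) ×ˢ
    (Set.univ.pi fun a => Metric.closedBall 0
      (Real.exp ((|Real.log (u₀ a)⁻¹| + |Real.log (u₁ a)⁻¹|) / 2)))
  have hK : IsCompact K := (isCompact_univ_pi fun _ => isCompact_closedBall _ _).prod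
    (isCompact_univ_pi fun _ => isCompact_closedBall _ _)
  have hT : Continuous T := T.continuous_of_finiteDimensional
  have hF : Continuous F := by fun_prop
  refine (hK.bddAbove_image hF.norm.continuousOn).mono ?_
  rintro _ ⟨z, ⟨h0, h1⟩, rfl⟩
  refine ⟨(fun b => interpWeight (v₀ b) (v₁ b) z, fun a => (interpWeight (u₀ a) (u₁ a) z)⁻¹),
    ⟨fun b _ => ?_, fun a _ => ?_⟩, rfl⟩
  · exact mem_closedBall_zero_iff.2 (norm_interpWeight_le _ _ h0 h1)
  · refine mem_closedBall_zero_iff.2 (le_of_eq_of_le ?_ (norm_interpWeight_le _ _ h0 h1))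
    rw [interpWeight_inv_inv]

variable [Fintype α] [Fintype β]

/-- `T` maps the weighted space `ℓ²(u)` to `ℓ²(v)` with squared operator norm at most `c`. -/
def HasWeightedBound (T : (α → ℂ) →ₗ[ℂ] (β → ℂ)) (u : α → ℝ) (v : β → ℝ) (c : ℝ) : Prop :=
  ∀ x, ∑ b, v b * ‖T x b‖ ^ 2 ≤ c * ∑ a, u a * ‖x a‖ ^ 2

namespace HasWeightedBound

variable {T : (α → ℂ) →ₗ[ℂ] (β → ℂ)} {u u₀ u₁ : α → ℝ} {v v₀ v₁ : β → ℝ} {c c₀ c₁ : ℝ}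

/-- The Stein–Weiss interpolation theorem for `ℓ²` spaces with change of weights. -/
theorem rpow_mul_rpow (h₀ : HasWeightedBound T u₀ v₀ c₀) (h₁ : HasWeightedBound T u₁ v₁ c₁)
    (hu₀ : ∀ a, 0 < u₀ a) (hu₁ : ∀ a, 0 < u₁ a) (hv₀ : ∀ b, 0 < v₀ b) (hv₁ : ∀ b, 0 < v₁ b)
    (hc₀ : 0 ≤ c₀) (hc₁ : 0 ≤ c₁) {θ : ℝ} (hθ₀ : 0 ≤ θ) (hθ₁ : θ ≤ 1) :
    HasWeightedBound T (fun a => u₀ a ^ (1 - θ) * u₁ a ^ θ) (fun b => v₀ b ^ (1 - θ) * v₁ b ^ θ)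
      (c₀ ^ (1 - θ) * c₁ ^ θ) := by
  intro x
  let X (a : α) : ℂ := interpWeight (u₀ a) (u₁ a) θ * x a
  let Φ := steinFamily T u₀ u₁ v₀ v₁ X
  set N := ∑ a, ‖X a‖ ^ 2 with hN
  have hN0 : 0 ≤ N := Finset.sum_nonneg fun a _ => sq_nonneg _
  have left_bound (z : ℂ) (hz : z.re = 0) : ‖Φ z‖ ≤ √(c₀ * N) := by
    refine Real.le_sqrt_of_sq_le ?_
    rw [norm_steinFamily_sq _ _ _ hv₀ hv₁, hN, ← sum_mul_norm_inv_interpWeight_mul_sq hu₀ hu₁ X z]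
    simpa only [hz, sub_zero, Real.rpow_one, Real.rpow_zero, mul_one] using
      h₀ fun a => (interpWeight (u₀ a) (u₁ a) z)⁻¹ * X a
  have right_bound (z : ℂ) (hz : z.re = 1) : ‖Φ z‖ ≤ √(c₁ * N) := by
    refine Real.le_sqrt_of_sq_le ?_
    rw [norm_steinFamily_sq _ _ _ hv₀ hv₁, hN, ← sum_mul_norm_inv_interpWeight_mul_sq hu₀ hu₁ X z]
    simpa only [hz, sub_self, Real.rpow_one, Real.rpow_zero, one_mul] using
      h₁ fun a => (interpWeight (u₀ a) (u₁ a) z)⁻¹ * X a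
  have hX : (fun a => (interpWeight (u₀ a) (u₁ a) θ)⁻¹ * X a) = x :=
    funext fun a => inv_mul_cancel_left₀ (interpWeight_ne_zero _ _ _) _
  have interp : ‖Φ θ‖ ≤ √(c₀ * N) ^ (1 - θ) * √(c₁ * N) ^ θ :=
    Complex.HadamardThreeLines.norm_le_interp_of_mem_verticalClosedStrip₀₁' Φ
      (z := θ) ⟨hθ₀, hθ₁⟩ (differentiable_steinFamily T u₀ u₁ v₀ v₁ X).diffContOnCl
      (bddAbove_norm_steinFamily ..) left_bound right_bound
  calc ∑ b, v₀ b ^ (1 - θ) * v₁ b ^ θ * ‖T x b‖ ^ 2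
      = ‖Φ θ‖ ^ 2 := by
        rw [norm_steinFamily_sq _ _ _ hv₀ hv₁, hX, Complex.ofReal_re]
    _ ≤ (√(c₀ * N) ^ (1 - θ) * √(c₁ * N) ^ θ) ^ 2 := by gcongr
    _ = (c₀ * N) ^ (1 - θ) * (c₁ * N) ^ θ := by
        rw [mul_pow, ← Real.rpow_mul_natCast (by positivity), ← Real.rpow_mul_natCast
          (by positivity), mul_comm (1 - θ), mul_comm θ, Real.rpow_natCast_mul (by positivity),
          Real.rpow_natCast_mul (by positivity), Real.sq_sqrt (by positivity),
          Real.sq_sqrt (by positivity)]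
    _ = c₀ ^ (1 - θ) * c₁ ^ θ * N := by
        rw [Real.mul_rpow hc₀ hN0, Real.mul_rpow hc₁ hN0, mul_mul_mul_comm,
          ← Real.rpow_add_of_nonneg hN0 (sub_nonneg.2 hθ₁) hθ₀, sub_add_cancel, Real.rpow_one]
    _ = c₀ ^ (1 - θ) * c₁ ^ θ * ∑ a, u₀ a ^ (1 - θ) * u₁ a ^ θ * ‖x a‖ ^ 2 := by
        rw [hN, ← sum_mul_norm_inv_interpWeight_mul_sq hu₀ hu₁ X θ]
        simp only [congrFun hX, Complex.ofReal_re]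

theorem sum {κ : Type*} {s : Finset κ} {u : κ → α → ℝ} {v : κ → β → ℝ}
    (h : ∀ i ∈ s, HasWeightedBound T (u i) (v i) c) :
    HasWeightedBound T (fun a => ∑ i ∈ s, u i a) (fun b => ∑ i ∈ s, v i b) c := by
  intro x
  simp only [Finset.sum_mul]
  rw [Finset.sum_comm, Finset.sum_comm (s := Finset.univ), Finset.mul_sum]
  exact Finset.sum_le_sum fun i hi => h i hi x

theorem const_mul (h : HasWeightedBound T u v c) {r : ℝ} (hr : 0 ≤ r) :
    HasWeightedBound T (fun a => r * u a) (fun b => r * v b) c := by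
  intro x
  simp only [mul_assoc, ← Finset.mul_sum]
  rw [mul_left_comm]
  exact mul_le_mul_of_nonneg_left (h x) hr

theorem adjoint (h : HasWeightedBound T u v c) {S : (β → ℂ) →ₗ[ℂ] (α → ℂ)}
    (hTS : ∀ x y, star (T x) ⬝ᵥ y = star x ⬝ᵥ S y) (hu : ∀ a, 0 < u a) (hv : ∀ b, 0 < v b)
    (hc : 0 ≤ c) :
    HasWeightedBound S (fun b => (v b)⁻¹) (fun a => (u a)⁻¹) c := by
  intro y
  let x (a : α) : ℂ := ((u a)⁻¹ : ℝ) * S y a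
  set P := ∑ a, (u a)⁻¹ * ‖S y a‖ ^ 2
  set Q := ∑ b, (v b)⁻¹ * ‖y b‖ ^ 2
  have hP : 0 ≤ P := Finset.sum_nonneg fun a _ => mul_nonneg (inv_nonneg.2 (hu a).le) (sq_nonneg _)
  have hQ : 0 ≤ Q := Finset.sum_nonneg fun b _ => mul_nonneg (inv_nonneg.2 (hv b).le) (sq_nonneg _)
  have norm_x : ∑ a, u a * ‖x a‖ ^ 2 = P := by
    refine Finset.sum_congr rfl fun a _ => ?_
    have := (hu a).ne'
    simp only [x, norm_mul, Complex.norm_real, mul_pow, Real.norm_eq_abs, sq_abs]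
    field_simp
  have pairing : star (T x) ⬝ᵥ y = P := by
    rw [hTS, Complex.ofReal_sum]
    refine Finset.sum_congr rfl fun a _ => ?_
    simp only [x, Pi.star_apply, star_mul', Complex.star_def, Complex.conj_ofReal, mul_assoc,
      Complex.conj_mul', Complex.ofReal_mul, Complex.ofReal_pow]
  have P_le : P ≤ ∑ b, ‖T x b‖ * ‖y b‖ := by
    rw [← Complex.ofReal_re P, ← pairing]
    refine (Complex.re_le_norm _).trans ((norm_sum_le _ _).trans_eq ?_)
    simp only [Pi.star_apply, norm_mul, norm_star]
  have cauchy_schwarz : (∑ b, ‖T x b‖ * ‖y b‖) ^ 2 ≤ (∑ b, v b * ‖T x b‖ ^ 2) * Q := by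
    refine Finset.sum_sq_le_sum_mul_sum_of_sq_le_mul _ (fun b _ => ?_) (fun b _ => ?_)
      fun b _ => Eq.le ?_
    · exact mul_nonneg (hv b).le (sq_nonneg _)
    · exact mul_nonneg (inv_nonneg.2 (hv b).le) (sq_nonneg _)
    · have := (hv b).ne'
      field_simp
  have P_sq_le : P * P ≤ c * Q * P :=
    calc P * P = P ^ 2 := (sq P).symm
      _ ≤ (∑ b, ‖T x b‖ * ‖y b‖) ^ 2 := by gcongr
      _ ≤ (∑ b, v b * ‖T x b‖ ^ 2) * Q := cauchy_schwarz
      _ ≤ (c * P) * Q := by gcongr; exact norm_x ▸ h x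
      _ = c * Q * P := by ring
  rcases hP.eq_or_lt with hP | hP
  · exact hP ▸ mul_nonneg hc hQ
  · exact le_of_mul_le_mul_right P_sq_le hP

theorem intervalIntegral {u : ℝ → α → ℝ} {v : ℝ → β → ℝ} {l r : ℝ} (hlr : l ≤ r)
    (h : ∀ θ ∈ Set.Icc l r, HasWeightedBound T (u θ) (v θ) c)
    (hu : ∀ a, IntervalIntegrable (u · a) MeasureTheory.volume l r)
    (hv : ∀ b, IntervalIntegrable (v · b) MeasureTheory.volume l r) :
    HasWeightedBound T (fun a => ∫ θ in l..r, u θ a) (fun b => ∫ θ in l..r, v θ b) c := by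
  intro x
  have hu' (a : α) := (hu a).mul_const (‖x a‖ ^ 2)
  have hv' (b : β) := (hv b).mul_const (‖T x b‖ ^ 2)
  simp only [← intervalIntegral.integral_mul_const]
  rw [← intervalIntegral.integral_finsetSum fun b _ => hv' b,
    ← intervalIntegral.integral_finsetSum fun a _ => hu' a, ← intervalIntegral.integral_const_mul]
  refine intervalIntegral.integral_mono_on hlr ?_ (.const_mul ?_ c) fun θ hθ => h θ hθ x
  · simpa only [Finset.sum_fn] using IntervalIntegrable.sum Finset.univ fun b _ => hv' b
  · simpa only [Finset.sum_fn] using IntervalIntegrable.sum Finset.univ fun a _ => hu' a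

theorem rpow (h : HasWeightedBound T (fun _ => 1) (fun _ => 1) c) (h' : HasWeightedBound T u v c₁)
    (hu : ∀ a, 0 < u a) (hv : ∀ b, 0 < v b) (hc : 0 ≤ c) (hc₁ : 0 ≤ c₁) {θ : ℝ} (hθ₀ : 0 ≤ θ)
    (hθ₁ : θ ≤ 1) :
    HasWeightedBound T (fun a => u a ^ θ) (fun b => v b ^ θ) (c ^ (1 - θ) * c₁ ^ θ) := by
  simpa only [Real.one_rpow, one_mul] using
    h.rpow_mul_rpow h' (fun _ => one_pos) hu (fun _ => one_pos) hv hc hc₁ hθ₀ hθ₁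

variable {s t : α → ℝ} {s' t' : β → ℝ}

theorem rpow_mul_rpow_of_add_le_one (h : HasWeightedBound T (fun _ => 1) (fun _ => 1) c)
    (hs : HasWeightedBound T s s' 1) (ht : HasWeightedBound T t t' 1) (hs₀ : ∀ a, 0 < s a)
    (ht₀ : ∀ a, 0 < t a) (hs'₀ : ∀ b, 0 < s' b) (ht'₀ : ∀ b, 0 < t' b) (hc : 0 ≤ c)
    {p q : ℝ} (hp : 0 ≤ p) (hq : 0 ≤ q) (hpq : p + q ≤ 1) :
    HasWeightedBound T (fun a => s a ^ p * t a ^ q) (fun b => s' b ^ p * t' b ^ q)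
      (c ^ (1 - (p + q))) := by
  rcases (add_nonneg hp hq).eq_or_lt with h0 | hpos
  · obtain rfl : p = 0 := by linarith
    obtain rfl : q = 0 := by linarith
    simpa only [Real.rpow_zero, mul_one, add_zero, sub_zero, Real.rpow_one] using h
  have rpow_rpow {x y : ℝ} (hx : 0 < x) (hy : 0 < y) :
      (x ^ (1 - q / (p + q)) * y ^ (q / (p + q))) ^ (p + q) = x ^ p * y ^ q := by
    rw [Real.mul_rpow (by positivity) (by positivity), ← Real.rpow_mul hx.le, ← Real.rpow_mul hy.le,
      sub_mul, div_mul_cancel₀ _ hpos.ne', one_mul, add_sub_cancel_right]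
  have geom_mean := hs.rpow_mul_rpow ht hs₀ ht₀ hs'₀ ht'₀ zero_le_one zero_le_one
    (div_nonneg hq hpos.le) (div_le_one_of_le₀ (by linarith) hpos.le)
  simp only [Real.one_rpow, mul_one] at geom_mean
  have := h.rpow geom_mean
    (fun a => mul_pos (Real.rpow_pos_of_pos (hs₀ a) _) (Real.rpow_pos_of_pos (ht₀ a) _))
    (fun b => mul_pos (Real.rpow_pos_of_pos (hs'₀ b) _) (Real.rpow_pos_of_pos (ht'₀ b) _))
    hc zero_le_one hpos.le hpq
  simpa only [rpow_rpow (hs₀ _) (ht₀ _), rpow_rpow (hs'₀ _) (ht'₀ _), Real.one_rpow, mul_one]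
    using this

end HasWeightedBound

end Interpolation

section RpowSlope

/-- The segment from `y ^ q` to `x ^ q`; its `q⁻¹`-th power is a weighted power mean. -/
noncomputable def rpowSegment (q θ x y : ℝ) : ℝ :=
  θ * x ^ q + (1 - θ) * y ^ q

lemma rpowSegment_pos {q θ x y : ℝ} (hθ : θ ∈ Set.Icc 0 1) (hx : 0 < x) (hy : 0 < y) :
    0 < rpowSegment q θ x y :=
  convex_Ioi (0 : ℝ) (Real.rpow_pos_of_pos hx q) (Real.rpow_pos_of_pos hy q) hθ.1
    (sub_nonneg.2 hθ.2) (add_sub_cancel _ _)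

lemma rpowSegment_pow_eq_sum (q θ : ℝ) {x y : ℝ} (hx : 0 < x) (hy : 0 < y) (n : ℕ) :
    rpowSegment q θ x y ^ n = ∑ m ∈ Finset.range (n + 1),
      θ ^ m * (1 - θ) ^ (n - m) * n.choose m * (x ^ (q * m) * y ^ (q * ↑(n - m))) := by
  rw [rpowSegment, add_pow]
  refine Finset.sum_congr rfl fun m _ => ?_
  rw [mul_pow, mul_pow, Real.rpow_mul_natCast hx.le, Real.rpow_mul_natCast hy.le]
  ring

lemma hasDerivAt_rpowSegment (q θ x y : ℝ) :
    HasDerivAt (fun θ => rpowSegment q θ x y) (x ^ q - y ^ q) θ := by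
  have := ((hasDerivAt_id θ).mul_const (x ^ q)).add
    (((hasDerivAt_id θ).const_sub 1).mul_const (y ^ q))
  exact this.congr_deriv (by ring)

lemma intervalIntegrable_rpowSegment_rpow (q r : ℝ) {x y : ℝ} (hx : 0 < x) (hy : 0 < y) :
    IntervalIntegrable (fun θ => rpowSegment q θ x y ^ r) MeasureTheory.volume 0 1 := by
  refine ContinuousOn.intervalIntegrable fun θ hθ => ?_
  rw [Set.uIcc_of_le zero_le_one] at hθ
  exact ((hasDerivAt_rpowSegment q θ x y).continuousAt.rpow_const
    (.inl (rpowSegment_pos hθ hx hy).ne')).continuousWithinAt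

/-- The reciprocal `(x - y) / (x ^ q - y ^ q)` of the slope of `t ↦ t ^ q`, in an integral form
that covers the diagonal `x = y`. -/
noncomputable def invRpowSlope (q x y : ℝ) : ℝ :=
  q⁻¹ * ∫ θ in (0 : ℝ)..1, rpowSegment q θ x y ^ (q⁻¹ - 1)

variable {q x y : ℝ}

lemma invRpowSlope_pos (hq : 0 < q) (hx : 0 < x) (hy : 0 < y) : 0 < invRpowSlope q x y :=
  mul_pos (inv_pos.2 hq) <| intervalIntegral.intervalIntegral_pos_of_pos_on
    (intervalIntegrable_rpowSegment_rpow q _ hx hy)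
    (fun _ hθ => Real.rpow_pos_of_pos (rpowSegment_pos (Set.Ioo_subset_Icc_self hθ) hx hy) _)
    one_pos

lemma invRpowSlope_mul_rpow_sub_rpow (hq : 0 < q) (hx : 0 < x) (hy : 0 < y) :
    invRpowSlope q x y * (x ^ q - y ^ q) = x - y := by
  have hderiv (θ : ℝ) (hθ : θ ∈ Set.uIcc (0 : ℝ) 1) :
      HasDerivAt (fun θ => rpowSegment q θ x y ^ q⁻¹)
        (q⁻¹ * rpowSegment q θ x y ^ (q⁻¹ - 1) * (x ^ q - y ^ q)) θ := by
    rw [Set.uIcc_of_le zero_le_one] at hθ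
    exact ((hasDerivAt_rpowSegment q θ x y).rpow_const
      (.inl (rpowSegment_pos hθ hx hy).ne')).congr_deriv (by ring)
  have ftc := intervalIntegral.integral_eq_sub_of_hasDerivAt hderiv
    (((intervalIntegrable_rpowSegment_rpow q _ hx hy).const_mul _).mul_const _)
  rw [intervalIntegral.integral_mul_const, intervalIntegral.integral_const_mul] at ftc
  rw [invRpowSlope, ftc]
  simp only [rpowSegment, one_mul, sub_self, zero_mul, add_zero, sub_zero, zero_add,
    Real.rpow_rpow_inv hx.le hq.ne', Real.rpow_rpow_inv hy.le hq.ne']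

namespace HasWeightedBound

variable {α β : Type*} [Fintype α] [Fintype β] {T : (α → ℂ) →ₗ[ℂ] (β → ℂ)} {c : ℝ}
  {s t : α → ℝ} {s' t' : β → ℝ}

theorem rpowSegment_pow (h : HasWeightedBound T (fun _ => 1) (fun _ => 1) c)
    (hs : HasWeightedBound T s s' 1) (ht : HasWeightedBound T t t' 1) (hs₀ : ∀ a, 0 < s a)
    (ht₀ : ∀ a, 0 < t a) (hs'₀ : ∀ b, 0 < s' b) (ht'₀ : ∀ b, 0 < t' b) (hc : 0 ≤ c)
    (hq : 0 ≤ q) {n : ℕ} (hqn : q * n ≤ 1) {θ : ℝ} (hθ : θ ∈ Set.Icc 0 1) :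
    HasWeightedBound T (fun a => rpowSegment q θ (s a) (t a) ^ n)
      (fun b => rpowSegment q θ (s' b) (t' b) ^ n) (c ^ (1 - q * n)) := by
  simp only [rpowSegment_pow_eq_sum q θ (hs₀ _) (ht₀ _),
    rpowSegment_pow_eq_sum q θ (hs'₀ _) (ht'₀ _)]
  refine sum fun m hm => const_mul ?_ ?_
  · have exponents : q * m + q * ↑(n - m) = q * n := by
      rw [← mul_add, ← Nat.cast_add, Nat.add_sub_of_le (Finset.mem_range_succ_iff.1 hm)]
    rw [← exponents] at hqn ⊢
    exact h.rpow_mul_rpow_of_add_le_one hs ht hs₀ ht₀ hs'₀ ht'₀ hc (by positivity) (by positivity)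
      hqn
  · have := hθ.1
    have := sub_nonneg.2 hθ.2
    positivity

theorem rpowSegment_rpow (h : HasWeightedBound T (fun _ => 1) (fun _ => 1) c)
    (hs : HasWeightedBound T s s' 1) (ht : HasWeightedBound T t t' 1) (hs₀ : ∀ a, 0 < s a)
    (ht₀ : ∀ a, 0 < t a) (hs'₀ : ∀ b, 0 < s' b) (ht'₀ : ∀ b, 0 < t' b) (hc : 0 ≤ c)
    (hq : 0 ≤ q) {n : ℕ} (hqn : q * n ≤ 1) {r : ℝ} (hr : 0 ≤ r) (hrn : r ≤ n) {θ : ℝ}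
    (hθ : θ ∈ Set.Icc 0 1) :
    HasWeightedBound T (fun a => rpowSegment q θ (s a) (t a) ^ r)
      (fun b => rpowSegment q θ (s' b) (t' b) ^ r) (c ^ (1 - q * r)) := by
  rcases hr.eq_or_lt with rfl | hr
  · simpa only [Real.rpow_zero, mul_zero, sub_zero, Real.rpow_one] using h
  have hn : (0 : ℝ) < n := hr.trans_le hrn
  have hrn' : r / n ≤ 1 := div_le_one_of_le₀ hrn hn.le
  have pos_s (a) := rpowSegment_pos (q := q) hθ (hs₀ a) (ht₀ a)
  have pos_s' (b) := rpowSegment_pos (q := q) hθ (hs'₀ b) (ht'₀ b)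
  have pow_rpow {w : ℝ} (hw : 0 < w) : (w ^ n) ^ (r / n) = w ^ r := by
    rw [← Real.rpow_natCast_mul hw.le, mul_div_cancel₀ r hn.ne']
  have bound := h.rpow (h.rpowSegment_pow hs ht hs₀ ht₀ hs'₀ ht'₀ hc hq hqn hθ)
    (fun a => pow_pos (pos_s a) n) (fun b => pow_pos (pos_s' b) n) hc (by positivity)
    (by positivity) hrn'
  have constant : c ^ (1 - r / n) * (c ^ (1 - q * n)) ^ (r / n) = c ^ (1 - q * r) := by
    rw [← Real.rpow_mul hc, ← Real.rpow_add_of_nonneg hc (sub_nonneg.2 hrn')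
      (mul_nonneg (sub_nonneg.2 hqn) (by positivity))]
    congr 1
    field_simp
    ring
  simpa only [pow_rpow (pos_s _), pow_rpow (pos_s' _), constant] using bound

theorem invRpowSlope (h : HasWeightedBound T (fun _ => 1) (fun _ => 1) c)
    (hs : HasWeightedBound T s s' 1) (ht : HasWeightedBound T t t' 1) (hs₀ : ∀ a, 0 < s a)
    (ht₀ : ∀ a, 0 < t a) (hs'₀ : ∀ b, 0 < s' b) (ht'₀ : ∀ b, 0 < t' b) (hc : 0 ≤ c)
    (hq : 0 < q) (hq₁ : q ≤ 1) :
    HasWeightedBound T (fun a => invRpowSlope q (s a) (t a))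
      (fun b => invRpowSlope q (s' b) (t' b)) (c ^ q) := by
  have floor_le : q * ⌊q⁻¹⌋₊ ≤ 1 := (le_inv_mul_iff₀ hq).1 (by
    simpa only [mul_one] using Nat.floor_le (inv_nonneg.2 hq.le))
  have le_floor : q⁻¹ - 1 ≤ ⌊q⁻¹⌋₊ := (Nat.sub_one_lt_floor q⁻¹).le
  have constant : 1 - q * (q⁻¹ - 1) = q := by
    rw [mul_sub, mul_inv_cancel₀ hq.ne']
    ring
  refine const_mul (intervalIntegral zero_le_one (fun θ hθ => ?_)
    (fun a => intervalIntegrable_rpowSegment_rpow q _ (hs₀ a) (ht₀ a))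
    fun b => intervalIntegrable_rpowSegment_rpow q _ (hs'₀ b) (ht'₀ b)) (inv_nonneg.2 hq.le)
  simpa only [constant] using h.rpowSegment_rpow hs ht hs₀ ht₀ hs'₀ ht'₀ hc hq.le floor_le
    (sub_nonneg.2 ((one_le_inv₀ hq).2 hq₁)) le_floor hθ

end HasWeightedBound

end RpowSlope

section EigenCoord

variable {m n : Type*} [Fintype m] [DecidableEq m] [Fintype n] [DecidableEq n]

lemma matFun_eq_cfc_s3 {x : Matrix n n ℂ} (hx : x.IsHermitian) (f : ℝ → ℝ) :
    matFun f x = cfc f x := by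
  rw [hx.cfc_eq, matFun, dif_pos hx]
  rfl

lemma matFun_one {x : Matrix n n ℂ} (hx : x.IsHermitian) : matFun (fun _ => 1) x = 1 :=
  (matFun_eq_cfc_s3 hx _).trans (cfc_const_one ℝ x hx)

lemma matFun_id {x : Matrix n n ℂ} (hx : x.IsHermitian) : matFun (fun t => t) x = x :=
  (matFun_eq_cfc_s3 hx _).trans (cfc_id' ℝ x hx)

lemma matFun_const_mul (c : ℝ) (f : ℝ → ℝ) {x : Matrix n n ℂ} (hx : x.IsHermitian) :
    matFun (fun t => c * f t) x = c • matFun f x := by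
  have hf : ContinuousOn f (spectrum ℝ x) := x.finite_real_spectrum.continuousOn f
  rw [matFun_eq_cfc_s3 hx, matFun_eq_cfc_s3 hx, cfc_const_mul c f x hf]

/-- The coordinates of a matrix in the basis of rank-one matrices built from the eigenvectors of
two Hermitian matrices `y` and `x`. It diagonalizes left multiplication by functions of `y` and
right multiplication by functions of `x` simultaneously. -/
noncomputable def eigenCoord {y : Matrix m m ℂ} {x : Matrix n n ℂ} (hy : y.IsHermitian)
    (hx : x.IsHermitian) : Matrix m n ℂ ≃ₗ[ℂ] (m × n → ℂ) where
  toFun X := fun p => (star (hy.eigenvectorUnitary : Matrix m m ℂ) * X *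
    (hx.eigenvectorUnitary : Matrix n n ℂ)) p.1 p.2
  invFun v := (hy.eigenvectorUnitary : Matrix m m ℂ) * of (fun i j => v (i, j)) *
    star (hx.eigenvectorUnitary : Matrix n n ℂ)
  map_add' X Z := by
    ext p
    simp only [Matrix.mul_add, Matrix.add_mul, Matrix.add_apply, Pi.add_apply]
  map_smul' c X := by
    ext p
    simp only [Matrix.mul_smul, Matrix.smul_mul, Matrix.smul_apply, Pi.smul_apply,
      RingHom.id_apply]
  left_inv X := by
    set U := (hy.eigenvectorUnitary : Matrix m m ℂ)
    set V := (hx.eigenvectorUnitary : Matrix n n ℂ)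
    have hU : U * star U = 1 := Unitary.coe_mul_star_self _
    have hV : V * star V = 1 := Unitary.coe_mul_star_self _
    calc U * (star U * X * V) * star V
        = (U * star U) * X * (V * star V) := by simp only [Matrix.mul_assoc]
      _ = X := by rw [hU, hV, Matrix.one_mul, Matrix.mul_one]
  right_inv v := by
    ext p
    simp only [← Matrix.mul_assoc, Unitary.coe_star_mul_self, Matrix.one_mul]
    rw [Matrix.mul_assoc, Unitary.coe_star_mul_self, Matrix.mul_one, of_apply]

variable {y : Matrix m m ℂ} {x : Matrix n n ℂ} (hy : y.IsHermitian) (hx : x.IsHermitian)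

lemma eigenCoord_apply (X : Matrix m n ℂ) (p : m × n) :
    eigenCoord hy hx X p = (star (hy.eigenvectorUnitary : Matrix m m ℂ) * X *
      (hx.eigenvectorUnitary : Matrix n n ℂ)) p.1 p.2 :=
  rfl

lemma eigenCoord_matFun_mul (f : ℝ → ℝ) (X : Matrix m n ℂ) (p : m × n) :
    eigenCoord hy hx (matFun f y * X) p = f (hy.eigenvalues p.1) * eigenCoord hy hx X p := by
  rw [eigenCoord_apply, eigenCoord_apply, matFun, dif_pos hy]
  simp only [← Matrix.mul_assoc, Unitary.coe_star_mul_self, Matrix.one_mul]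
  simp only [Matrix.mul_assoc, diagonal_mul]

lemma eigenCoord_mul_matFun (f : ℝ → ℝ) (X : Matrix m n ℂ) (p : m × n) :
    eigenCoord hy hx (X * matFun f x) p = f (hx.eigenvalues p.2) * eigenCoord hy hx X p := by
  rw [eigenCoord_apply, eigenCoord_apply, matFun, dif_pos hx]
  simp only [Matrix.mul_assoc, Unitary.coe_star_mul_self, Matrix.mul_one]
  simp only [← Matrix.mul_assoc, mul_diagonal, mul_comm]

lemma star_eigenCoord_dotProduct (X Z : Matrix m n ℂ) :
    star (eigenCoord hy hx X) ⬝ᵥ eigenCoord hy hx Z = trace (Xᴴ * Z) := by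
  set U := (hy.eigenvectorUnitary : Matrix m m ℂ)
  set V := (hx.eigenvectorUnitary : Matrix n n ℂ)
  have hU : U * Uᴴ = 1 := Unitary.coe_mul_star_self _
  have hV : V * Vᴴ = 1 := Unitary.coe_mul_star_self _
  calc star (eigenCoord hy hx X) ⬝ᵥ eigenCoord hy hx Z
      = trace ((Uᴴ * X * V)ᴴ * (Uᴴ * Z * V)) := by
        simp only [dotProduct, trace, diag, mul_apply, Fintype.sum_prod_type_right]
        rfl
    _ = trace (Vᴴ * (Xᴴ * (U * Uᴴ) * Z * V)) := by
        simp only [conjTranspose_mul, conjTranspose_conjTranspose, Matrix.mul_assoc]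
    _ = trace (Xᴴ * Z * (V * Vᴴ)) := by
        rw [hU, Matrix.mul_one, trace_mul_comm, Matrix.mul_assoc]
    _ = trace (Xᴴ * Z) := by rw [hV, Matrix.mul_one]

lemma sum_mul_norm_eigenCoord_sq {X Z : Matrix m n ℂ} {w : m × n → ℝ}
    (hZ : ∀ p, eigenCoord hy hx Z p = w p * eigenCoord hy hx X p) :
    ∑ p, w p * ‖eigenCoord hy hx X p‖ ^ 2 = (trace (Xᴴ * Z)).re := by
  rw [← star_eigenCoord_dotProduct hy hx, dotProduct, Complex.re_sum]
  refine Finset.sum_congr rfl fun p _ => ?_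
  rw [hZ, Pi.star_apply, mul_left_comm, Complex.re_ofReal_mul, Complex.star_def, Complex.conj_mul',
    ← Complex.ofReal_pow, Complex.ofReal_re]

end EigenCoord

section TraceInequalities

variable {n : Type*} [Fintype n] [DecidableEq n] {y x : Matrix n n ℂ}

lemma eigenCoord_matFun_sub_matFun (hy : y.IsHermitian) (hx : x.IsHermitian) (f : ℝ → ℝ)
    (p : n × n) : eigenCoord hy hx (matFun f y - matFun f x) p =
      ↑(f (hy.eigenvalues p.1) - f (hx.eigenvalues p.2)) * eigenCoord hy hx 1 p := by
  have left := eigenCoord_matFun_mul hy hx f 1 p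
  have right := eigenCoord_mul_matFun hy hx f 1 p
  rw [Matrix.mul_one] at left
  rw [Matrix.one_mul] at right
  rw [map_sub, Pi.sub_apply, left, right, Complex.ofReal_sub, sub_mul]

lemma eigenCoord_sub (hy : y.IsHermitian) (hx : x.IsHermitian) (p : n × n) :
    eigenCoord hy hx (y - x) p =
      ↑(hy.eigenvalues p.1 - hx.eigenvalues p.2) * eigenCoord hy hx 1 p := by
  rw [← eigenCoord_matFun_sub_matFun hy hx fun t => t, matFun_id hy, matFun_id hx]

/-- Klein's inequality. -/
theorem trace_matFun_mul_sub_le (hy : y.IsHermitian) (hx : x.IsHermitian) {f f' : ℝ → ℝ}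
    (h : ∀ i j, f' (hx.eigenvalues j) * (hy.eigenvalues i - hx.eigenvalues j) ≤
      f (hy.eigenvalues i) - f (hx.eigenvalues j)) :
    (trace (matFun f' x * (y - x))).re ≤ (trace (matFun f y)).re - (trace (matFun f x)).re := by
  let w (p : n × n) : ℝ := f (hy.eigenvalues p.1) - f (hx.eigenvalues p.2) -
    f' (hx.eigenvalues p.2) * (hy.eigenvalues p.1 - hx.eigenvalues p.2)
  have remainder : ∑ p, w p * ‖eigenCoord hy hx 1 p‖ ^ 2 =
      (trace ((1 : Matrix n n ℂ)ᴴ * (matFun f y - matFun f x - (y - x) * matFun f' x))).re := by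
    refine sum_mul_norm_eigenCoord_sq hy hx fun p => ?_
    rw [map_sub, Pi.sub_apply, eigenCoord_matFun_sub_matFun, eigenCoord_mul_matFun, eigenCoord_sub]
    push_cast [w]
    ring
  have nonneg : 0 ≤ ∑ p, w p * ‖eigenCoord hy hx 1 p‖ ^ 2 :=
    Finset.sum_nonneg fun p _ => mul_nonneg (sub_nonneg.2 (h p.1 p.2)) (sq_nonneg _)
  rw [remainder, conjTranspose_one, Matrix.one_mul, trace_sub, trace_sub, Complex.sub_re,
    Complex.sub_re, trace_mul_comm] at nonneg
  linarith

lemma rpow_tangent_le {p a b : ℝ} (hp : 1 ≤ p) (ha : 0 < a) (hb : 0 < b) :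
    p * a ^ (p - 1) * (b - a) ≤ b ^ p - a ^ p := by
  have bernoulli := one_add_mul_self_le_rpow_one_add (s := b / a - 1)
    (by linarith [div_pos hb ha]) hp
  rw [add_sub_cancel, Real.div_rpow hb.le ha.le, le_div_iff₀ (Real.rpow_pos_of_pos ha p),
    ← sub_add_cancel p 1, Real.rpow_add_one ha.ne', sub_add_cancel] at bernoulli
  rw [← sub_add_cancel p 1, Real.rpow_add_one ha.ne', sub_add_cancel]
  field_simp at bernoulli
  linarith

theorem sum_inv_invRpowSlope_mul_norm_eigenCoord_sq (hy : y.PosDef) (hx : x.PosDef) {q : ℝ}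
    (hq : 0 < q) :
    ∑ p, (invRpowSlope q (hy.1.eigenvalues p.1) (hx.1.eigenvalues p.2))⁻¹ *
        ‖eigenCoord hy.1 hx.1 (y - x) p‖ ^ 2 =
      (trace ((matFun (fun t => t ^ q) y - matFun (fun t => t ^ q) x) * (y - x))).re := by
  have herm : (y - x)ᴴ = y - x := hy.1.sub hx.1
  rw [trace_mul_comm, ← congrArg (· * _) herm]
  refine sum_mul_norm_eigenCoord_sq hy.1 hx.1 fun p => ?_
  have hy₀ := hy.eigenvalues_pos p.1
  have hx₀ := hx.eigenvalues_pos p.2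
  rw [eigenCoord_matFun_sub_matFun, eigenCoord_sub, ← mul_assoc, ← Complex.ofReal_mul,
    ← invRpowSlope_mul_rpow_sub_rpow hq hy₀ hx₀,
    inv_mul_cancel_left₀ (invRpowSlope_pos hq hy₀ hx₀).ne']

end TraceInequalities

section PartialTrace

open scoped Kronecker

variable {ι₁ ι₂ : Type*} [Fintype ι₂]

/-- The partial trace as a linear map. -/
noncomputable def ptraceLinearMap :
    Matrix (ι₁ × ι₂) (ι₁ × ι₂) ℂ →ₗ[ℂ] Matrix ι₁ ι₁ ℂ where
  toFun := ptrace
  map_add' ρ σ := by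
    ext i j
    simp only [ptrace, of_apply, Matrix.add_apply, Finset.sum_add_distrib]
  map_smul' c ρ := by
    ext i j
    simp only [ptrace, of_apply, Matrix.smul_apply, Finset.smul_sum, RingHom.id_apply]

lemma ptrace_sub (ρ σ : Matrix (ι₁ × ι₂) (ι₁ × ι₂) ℂ) :
    ptrace (ρ - σ) = ptrace ρ - ptrace σ :=
  map_sub ptraceLinearMap ρ σ

lemma posDef_ptrace [Nonempty ι₂] {ρ : Matrix (ι₁ × ι₂) (ι₁ × ι₂) ℂ} (h : ρ.PosDef) :
    (ptrace ρ).PosDef := by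
  have sum_blocks : ptrace ρ = ∑ k : ι₂, ρ.submatrix (fun i => (i, k)) (fun i => (i, k)) := by
    ext i j
    simp only [ptrace, of_apply, Matrix.sum_apply, submatrix_apply]
  rw [sum_blocks]
  exact posDef_sum Finset.univ_nonempty fun k _ => h.submatrix (Prod.mk_left_injective k)

variable [Fintype ι₁]

lemma trace_ptrace (ρ : Matrix (ι₁ × ι₂) (ι₁ × ι₂) ℂ) : trace (ptrace ρ) = trace ρ := by
  simp only [trace, diag, ptrace, of_apply, Fintype.sum_prod_type]

variable [DecidableEq ι₂]

lemma ptrace_mul_kronecker_one (ρ : Matrix (ι₁ × ι₂) (ι₁ × ι₂) ℂ) (k : Matrix ι₁ ι₁ ℂ) :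
    ptrace (ρ * (k ⊗ₖ (1 : Matrix ι₂ ι₂ ℂ))) = ptrace ρ * k := by
  ext i j
  simp only [mul_apply, ptrace, of_apply, kroneckerMap_apply, Fintype.sum_prod_type, one_apply,
    Finset.sum_mul, mul_ite, mul_one, mul_zero, Finset.sum_ite_eq', Finset.mem_univ, if_true]
  exact Finset.sum_comm

lemma ptrace_kronecker_one_mul (k : Matrix ι₁ ι₁ ℂ) (ρ : Matrix (ι₁ × ι₂) (ι₁ × ι₂) ℂ) :
    ptrace ((k ⊗ₖ (1 : Matrix ι₂ ι₂ ℂ)) * ρ) = k * ptrace ρ := by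
  ext i j
  simp only [mul_apply, ptrace, of_apply, kroneckerMap_apply, Fintype.sum_prod_type, one_apply,
    Finset.mul_sum, mul_ite, ite_mul, mul_one, mul_zero, zero_mul, Finset.sum_ite_eq,
    Finset.mem_univ, if_true]
  exact Finset.sum_comm

lemma trace_conjTranspose_kronecker_one_mul (k : Matrix ι₁ ι₁ ℂ)
    (ρ : Matrix (ι₁ × ι₂) (ι₁ × ι₂) ℂ) :
    trace ((k ⊗ₖ (1 : Matrix ι₂ ι₂ ℂ))ᴴ * ρ) = trace (kᴴ * ptrace ρ) := by
  rw [conjTranspose_kronecker, conjTranspose_one, ← trace_ptrace, ptrace_kronecker_one_mul]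

variable [DecidableEq ι₁] {y x : Matrix (ι₁ × ι₂) (ι₁ × ι₂) ℂ} {y₁ x₁ : Matrix ι₁ ι₁ ℂ}

/-- The ampliation `k ↦ k ⊗ 1`, the adjoint of the partial trace, in eigencoordinates. -/
noncomputable def ampliationCoord (hy : y.IsHermitian) (hx : x.IsHermitian)
    (hy₁ : y₁.IsHermitian) (hx₁ : x₁.IsHermitian) :
    (ι₁ × ι₁ → ℂ) →ₗ[ℂ] ((ι₁ × ι₂) × (ι₁ × ι₂) → ℂ) :=
  eigenCoord hy hx ∘ₗ LinearMap.flip kroneckerBilinear (1 : Matrix ι₂ ι₂ ℂ) ∘ₗ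
    (eigenCoord hy₁ hx₁).symm.toLinearMap

/-- The partial trace in eigencoordinates. -/
noncomputable def ptraceCoord (hy : y.IsHermitian) (hx : x.IsHermitian)
    (hy₁ : y₁.IsHermitian) (hx₁ : x₁.IsHermitian) :
    ((ι₁ × ι₂) × (ι₁ × ι₂) → ℂ) →ₗ[ℂ] (ι₁ × ι₁ → ℂ) :=
  eigenCoord hy₁ hx₁ ∘ₗ ptraceLinearMap ∘ₗ (eigenCoord hy hx).symm.toLinearMap

lemma ampliationCoord_eigenCoord (hy : y.IsHermitian) (hx : x.IsHermitian)
    (hy₁ : y₁.IsHermitian) (hx₁ : x₁.IsHermitian) (k : Matrix ι₁ ι₁ ℂ) :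
    ampliationCoord hy hx hy₁ hx₁ (eigenCoord hy₁ hx₁ k) =
      eigenCoord hy hx (k ⊗ₖ (1 : Matrix ι₂ ι₂ ℂ)) := by
  simp only [ampliationCoord, LinearMap.comp_apply, LinearEquiv.coe_coe,
    LinearEquiv.symm_apply_apply]
  rfl

lemma ptraceCoord_eigenCoord (hy : y.IsHermitian) (hx : x.IsHermitian)
    (hy₁ : y₁.IsHermitian) (hx₁ : x₁.IsHermitian) (ρ : Matrix (ι₁ × ι₂) (ι₁ × ι₂) ℂ) :
    ptraceCoord hy hx hy₁ hx₁ (eigenCoord hy hx ρ) = eigenCoord hy₁ hx₁ (ptrace ρ) := by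
  simp only [ptraceCoord, LinearMap.comp_apply, LinearEquiv.coe_coe, LinearEquiv.symm_apply_apply]
  rfl

lemma star_ampliationCoord_dotProduct (hy : y.IsHermitian) (hx : x.IsHermitian)
    (hy₁ : y₁.IsHermitian) (hx₁ : x₁.IsHermitian) (v : ι₁ × ι₁ → ℂ)
    (w : (ι₁ × ι₂) × (ι₁ × ι₂) → ℂ) :
    star (ampliationCoord hy hx hy₁ hx₁ v) ⬝ᵥ w = star v ⬝ᵥ ptraceCoord hy hx hy₁ hx₁ w := by
  obtain ⟨k, rfl⟩ := (eigenCoord hy₁ hx₁).surjective v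
  obtain ⟨ρ, rfl⟩ := (eigenCoord hy hx).surjective w
  rw [ampliationCoord_eigenCoord, ptraceCoord_eigenCoord, star_eigenCoord_dotProduct,
    star_eigenCoord_dotProduct, trace_conjTranspose_kronecker_one_mul]

lemma hasWeightedBound_ampliationCoord_one (hy : y.IsHermitian) (hx : x.IsHermitian)
    (hy₁ : y₁.IsHermitian) (hx₁ : x₁.IsHermitian) :
    HasWeightedBound (ampliationCoord hy hx hy₁ hx₁) (fun _ => 1) (fun _ => 1)
      (Fintype.card ι₂) := by
  intro v
  obtain ⟨k, rfl⟩ := (eigenCoord hy₁ hx₁).surjective v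
  rw [ampliationCoord_eigenCoord, sum_mul_norm_eigenCoord_sq (Z := k ⊗ₖ 1) hy hx (by simp),
    sum_mul_norm_eigenCoord_sq (Z := k) hy₁ hx₁ (by simp), conjTranspose_kronecker,
    conjTranspose_one, ← mul_kronecker_mul, Matrix.one_mul, trace_kronecker, trace_one,
    ← Complex.ofReal_natCast, Complex.re_mul_ofReal, mul_comm]

lemma hasWeightedBound_ampliationCoord_left (hy : y.IsHermitian) (hx : x.IsHermitian)
    (hy₁ : (ptrace y).IsHermitian) (hx₁ : x₁.IsHermitian) :
    HasWeightedBound (ampliationCoord hy hx hy₁ hx₁) (fun p => hy₁.eigenvalues p.1)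
      (fun p => hy.eigenvalues p.1) 1 := by
  intro v
  obtain ⟨k, rfl⟩ := (eigenCoord hy₁ hx₁).surjective v
  rw [ampliationCoord_eigenCoord,
    sum_mul_norm_eigenCoord_sq hy hx (eigenCoord_matFun_mul hy hx (fun t => t) _),
    sum_mul_norm_eigenCoord_sq hy₁ hx₁ (eigenCoord_matFun_mul hy₁ hx₁ (fun t => t) _),
    matFun_id hy, matFun_id hy₁, trace_conjTranspose_kronecker_one_mul,
    ptrace_mul_kronecker_one, one_mul]

lemma hasWeightedBound_ampliationCoord_right (hy : y.IsHermitian) (hx : x.IsHermitian)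
    (hy₁ : y₁.IsHermitian) (hx₁ : (ptrace x).IsHermitian) :
    HasWeightedBound (ampliationCoord hy hx hy₁ hx₁) (fun p => hx₁.eigenvalues p.2)
      (fun p => hx.eigenvalues p.2) 1 := by
  intro v
  obtain ⟨k, rfl⟩ := (eigenCoord hy₁ hx₁).surjective v
  rw [ampliationCoord_eigenCoord,
    sum_mul_norm_eigenCoord_sq hy hx (eigenCoord_mul_matFun hy hx (fun t => t) _),
    sum_mul_norm_eigenCoord_sq hy₁ hx₁ (eigenCoord_mul_matFun hy₁ hx₁ (fun t => t) _),
    matFun_id hx, matFun_id hx₁, trace_conjTranspose_kronecker_one_mul,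
    ptrace_kronecker_one_mul, one_mul]

theorem re_trace_rpow_ptrace_sub_mul_sub_le_of_pos [Nonempty ι₂] (hy : y.PosDef) (hx : x.PosDef)
    {q : ℝ} (hq : 0 < q) (hq₁ : q ≤ 1) :
    (trace ((matFun (fun t => t ^ q) (ptrace y) - matFun (fun t => t ^ q) (ptrace x)) *
        (ptrace y - ptrace x))).re ≤
      (Fintype.card ι₂ : ℝ) ^ q *
        (trace ((matFun (fun t => t ^ q) y - matFun (fun t => t ^ q) x) * (y - x))).re := by
  have hy₁ := posDef_ptrace hy
  have hx₁ := posDef_ptrace hx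
  have ampliation_bound := (hasWeightedBound_ampliationCoord_one hy.1 hx.1 hy₁.1 hx₁.1).invRpowSlope
    (hasWeightedBound_ampliationCoord_left _ _ _ _) (hasWeightedBound_ampliationCoord_right _ _ _ _)
    (fun p => hy₁.eigenvalues_pos p.1) (fun p => hx₁.eigenvalues_pos p.2)
    (fun p => hy.eigenvalues_pos p.1) (fun p => hx.eigenvalues_pos p.2) (Nat.cast_nonneg _) hq hq₁
  have ptrace_bound := ampliation_bound.adjoint (star_ampliationCoord_dotProduct _ _ _ _)
    (fun p => invRpowSlope_pos hq (hy₁.eigenvalues_pos p.1) (hx₁.eigenvalues_pos p.2))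
    (fun p => invRpowSlope_pos hq (hy.eigenvalues_pos p.1) (hx.eigenvalues_pos p.2))
    (by positivity) (eigenCoord hy.1 hx.1 (y - x))
  rwa [ptraceCoord_eigenCoord, ptrace_sub, sum_inv_invRpowSlope_mul_norm_eigenCoord_sq hy hx hq,
    sum_inv_invRpowSlope_mul_norm_eigenCoord_sq hy₁ hx₁ hq] at ptrace_bound

theorem re_trace_rpow_ptrace_sub_mul_sub_le [Nonempty ι₂] (hy : y.PosDef) (hx : x.PosDef) {q : ℝ}
    (hq : 0 ≤ q) (hq₁ : q ≤ 1) :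
    (trace ((matFun (fun t => t ^ q) (ptrace y) - matFun (fun t => t ^ q) (ptrace x)) *
        (ptrace y - ptrace x))).re ≤
      (Fintype.card ι₂ : ℝ) ^ q *
        (trace ((matFun (fun t => t ^ q) y - matFun (fun t => t ^ q) x) * (y - x))).re := by
  rcases hq.eq_or_lt with rfl | hq
  · simp only [Real.rpow_zero, matFun_one hy.1, matFun_one hx.1, matFun_one (posDef_ptrace hy).1,
      matFun_one (posDef_ptrace hx).1, sub_self, Matrix.zero_mul, trace_zero, Complex.zero_re,
      mul_zero, le_refl]
  · exact re_trace_rpow_ptrace_sub_mul_sub_le_of_pos hy hx hq hq₁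

end PartialTrace

section Subgradient

variable {E F : Type*} [AddCommGroup E] [Module ℝ E] [AddCommGroup F] [Module ℝ F]

/-- `u x` is a subgradient of `f` relative to `s` at every point `x` of `s`. -/
def HasSubgradientOn (s : Set E) (f : E → ℝ) (u : E → E →ₗ[ℝ] ℝ) : Prop :=
  ∀ ⦃x⦄, x ∈ s → ∀ ⦃y⦄, y ∈ s → u x (y - x) ≤ f y - f x

lemma convexOn_of_subsingleton [Subsingleton E] {s : Set E} (hs : Convex ℝ s) (f : E → ℝ) :
    ConvexOn ℝ s f := by
  rw [show f = fun _ => f 0 from funext fun x => congrArg f (Subsingleton.elim x 0)]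
  exact convexOn_const _ hs

namespace HasSubgradientOn

variable {s : Set E} {f g : E → ℝ} {u v : E → E →ₗ[ℝ] ℝ}

lemma convexOn (h : HasSubgradientOn s f u) (hs : Convex ℝ s) : ConvexOn ℝ s f := by
  refine ⟨hs, fun x hx y hy a b ha hb hab => ?_⟩
  set z := a • x + b • y
  have hz : z ∈ s := hs hx hy ha hb hab
  have balanced : a * u z (x - z) + b * u z (y - z) = 0 := by
    rw [← smul_eq_mul, ← smul_eq_mul, ← map_smul, ← map_smul, ← map_add]
    convert map_zero (u z)
    rw [smul_sub, smul_sub, sub_add_sub_comm, ← add_smul, hab, one_smul, sub_self]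
  have at_x := mul_le_mul_of_nonneg_left (h hz hx) ha
  have at_y := mul_le_mul_of_nonneg_left (h hz hy) hb
  rw [smul_eq_mul, smul_eq_mul, ← one_mul (f z), ← hab]
  linarith

lemma const_mul {c : ℝ} (h : HasSubgradientOn s f u) (hc : 0 ≤ c) :
    HasSubgradientOn s (fun x => c * f x) (fun x => c • u x) := by
  intro x hx y hy
  rw [LinearMap.smul_apply, smul_eq_mul, ← mul_sub]
  exact mul_le_mul_of_nonneg_left (h hx hy) hc

lemma comp {t : Set F} {L : F →ₗ[ℝ] E} (h : HasSubgradientOn s f u) (hL : Set.MapsTo L t s) :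
    HasSubgradientOn t (fun x => f (L x)) (fun x => u (L x) ∘ₗ L) := by
  intro x hx y hy
  rw [LinearMap.comp_apply, map_sub]
  exact h (hL hx) (hL hy)

lemma le_sub_lineMap (hf : HasSubgradientOn s f u) (hg : HasSubgradientOn s g v)
    (hs : Convex ℝ s) (huv : ∀ x ∈ s, ∀ y ∈ s, (v y - v x) (y - x) ≤ (u y - u x) (y - x))
    {x y : E} (hx : x ∈ s) (hy : y ∈ s) {a b : ℝ} (ha : 0 ≤ a) (hab : a ≤ b) (hb : b ≤ 1) :
    (b - a) * ((u x - v x) (y - x) -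
        (v (AffineMap.lineMap x y b) - v (AffineMap.lineMap x y a)) (y - x)) ≤
      (f - g) (AffineMap.lineMap x y b) - (f - g) (AffineMap.lineMap x y a) := by
  set z : ℝ →ᵃ[ℝ] E := AffineMap.lineMap x y
  have hz {t : ℝ} (ht₀ : 0 ≤ t) (ht₁ : t ≤ 1) : z t ∈ s :=
    hs.lineMap_mem hx hy ⟨ht₀, ht₁⟩
  have hza := hz ha (hab.trans hb)
  have hzb := hz (ha.trans hab) hb
  have z_sub (t r : ℝ) : z t - z r = (t - r) • (y - x) := by
    simp only [z, AffineMap.lineMap_apply_module']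
    module
  have f_increment := hf hza hzb
  have g_increment := hg hzb hza
  have monotone : (v (z a) - v x) (y - x) ≤ (u (z a) - u x) (y - x) := by
    rcases ha.eq_or_lt with rfl | ha
    · simp only [z, AffineMap.lineMap_apply_zero, sub_self, le_refl]
    · have h := huv x hx (z a) hza
      have hzx : z a - x = a • (y - x) := by
        simp only [z, AffineMap.lineMap_apply_module', add_sub_cancel_right]
      rw [hzx, map_smul, map_smul] at h
      exact le_of_smul_le_smul_left h ha
  have scaled := mul_le_mul_of_nonneg_left monotone (sub_nonneg.2 hab)
  rw [z_sub, map_smul, smul_eq_mul] at f_increment g_increment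
  simp only [LinearMap.sub_apply, Pi.sub_apply] at scaled ⊢
  linarith

/-- Over `n + 1` equal steps from `x` to `y`, each step loses one increment of `v`, and the losses
telescope. -/
lemma sub_apply_sub_div_le (hf : HasSubgradientOn s f u) (hg : HasSubgradientOn s g v)
    (hs : Convex ℝ s) (huv : ∀ x ∈ s, ∀ y ∈ s, (v y - v x) (y - x) ≤ (u y - u x) (y - x))
    {x y : E} (hx : x ∈ s) (hy : y ∈ s) (n : ℕ) :
    (u x - v x) (y - x) - 1 / ((n : ℝ) + 1) * (v y - v x) (y - x) ≤ (f - g) y - (f - g) x := by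
  let z : ℝ →ᵃ[ℝ] E := AffineMap.lineMap x y
  let t (k : ℕ) : ℝ := k / (n + 1)
  have t_last : t (n + 1) = 1 := by
    simp only [t, Nat.cast_add_one]
    exact div_self n.cast_add_one_ne_zero
  have z_last : z (t (n + 1)) = y := by
    simp only [z, t_last, AffineMap.lineMap_apply_one]
  have z_first : z (t 0) = x := by
    simp only [z, t, Nat.cast_zero, zero_div, AffineMap.lineMap_apply_zero]
  have t_step (k : ℕ) : t (k + 1) - t k = 1 / ((n : ℝ) + 1) := by
    simp only [t]
    push_cast
    ring
  have t_mono : Monotone t := fun k l hkl => by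
    simp only [t]
    gcongr
  have increments : ∑ k ∈ Finset.range (n + 1), (t (k + 1) - t k) * ((u x - v x) (y - x) -
        (v (z (t (k + 1))) - v (z (t k))) (y - x)) ≤
      ∑ k ∈ Finset.range (n + 1), ((f - g) (z (t (k + 1))) - (f - g) (z (t k))) := by
    refine Finset.sum_le_sum fun k hk =>
      le_sub_lineMap hf hg hs huv hx hy ?_ (t_mono k.le_succ) ?_
    · positivity
    · exact (t_mono (Finset.mem_range.1 hk)).trans_eq t_last
  rw [Finset.sum_range_sub (fun k => (f - g) (z (t k))), z_last, z_first] at increments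
  refine le_of_eq_of_le ?_ increments
  simp only [t_step, ← Finset.mul_sum, Finset.sum_sub_distrib, LinearMap.sub_apply,
    Finset.sum_range_sub (fun k => v (z (t k)) (y - x)), z_last, z_first, Finset.sum_const,
    Finset.card_range, nsmul_eq_mul]
  push_cast
  field_simp

lemma sub (hf : HasSubgradientOn s f u) (hg : HasSubgradientOn s g v) (hs : Convex ℝ s)
    (huv : ∀ x ∈ s, ∀ y ∈ s, (v y - v x) (y - x) ≤ (u y - u x) (y - x)) :
    HasSubgradientOn s (f - g) (u - v) := by
  intro x hx y hy
  have limit := (tendsto_one_div_add_atTop_nhds_zero_nat (𝕜 := ℝ)).mul_const ((v y - v x) (y - x))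
    |>.const_sub ((u x - v x) (y - x))
  rw [zero_mul, sub_zero] at limit
  exact le_of_tendsto' limit (sub_apply_sub_div_le hf hg hs huv hx hy)

end HasSubgradientOn

end Subgradient

section Convexity

variable {n : Type*}

lemma convex_posDef : Convex ℝ {x : Matrix n n ℂ | x.PosDef} := by
  refine convex_iff_forall_pos.2 fun x hx y hy a b ha hb _ => ?_
  exact (hx.smul ha).add (hy.smul hb)

variable [Fintype n]

/-- The real-linear functional `h ↦ Re Tr (a h)`, which represents `a` as a gradient. -/
noncomputable def reTraceMul (a : Matrix n n ℂ) : Matrix n n ℂ →ₗ[ℝ] ℝ :=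
  Complex.reLm ∘ₗ (traceLinearMap n ℝ ℂ) ∘ₗ LinearMap.mulLeft ℝ a

lemma reTraceMul_apply (a h : Matrix n n ℂ) : reTraceMul a h = (trace (a * h)).re :=
  rfl

lemma reTraceMul_sub (a b : Matrix n n ℂ) : reTraceMul (a - b) = reTraceMul a - reTraceMul b := by
  ext h
  simp only [reTraceMul_apply, Matrix.sub_mul, trace_sub, Complex.sub_re, LinearMap.sub_apply]

lemma hasSubgradientOn_re_trace_rpow [DecidableEq n] {p : ℝ} (hp : 1 ≤ p) :
    HasSubgradientOn {x : Matrix n n ℂ | x.PosDef} (fun x => (trace (matFun (fun t => t ^ p) x)).re)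
      (fun x => p • reTraceMul (matFun (fun t => t ^ (p - 1)) x)) := by
  intro x hx y hy
  have klein := trace_matFun_mul_sub_le (f := fun t => t ^ p) (f' := fun t => p * t ^ (p - 1))
    hy.1 hx.1 fun i j => rpow_tangent_le hp (hx.eigenvalues_pos j) (hy.eigenvalues_pos i)
  rwa [matFun_const_mul p _ hx.1, smul_mul_assoc, trace_smul, Complex.smul_re] at klein

end Convexity

/-- For `1 ≤ p ≤ 2` the map
`G(ρ) = d₂^(p−1) · Tr₁₂ ρ^p − Tr₁ ρ₁^p` is convex on positive definite operators on
`H = H₁ ⊗ H₂`, where `ρ₁ = Tr₂ ρ` and `d₂ = dim H₂`. -/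
theorem rpow_sub_partialTrace_convex
    {ι₁ ι₂ : Type*} [Fintype ι₁] [DecidableEq ι₁] [Fintype ι₂] [DecidableEq ι₂]
    (d₂ : ℕ) (hd₂ : d₂ = Fintype.card ι₂)
    (p : ℝ) (hp1 : 1 ≤ p) (hp2 : p ≤ 2) :
    ConvexOn ℝ {ρ : Matrix (ι₁ × ι₂) (ι₁ × ι₂) ℂ | ρ.PosDef}
      (fun ρ => (d₂ : ℝ) ^ (p - 1) * (Matrix.trace (matFun (fun t : ℝ => t ^ p) ρ)).re
        - (Matrix.trace (matFun (fun t : ℝ => t ^ p) (ptrace ρ))).re) := by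
  subst hd₂
  rcases isEmpty_or_nonempty ι₂ with _ | _
  · exact convexOn_of_subsingleton convex_posDef _
  have total := (hasSubgradientOn_re_trace_rpow (n := ι₁ × ι₂) hp1).const_mul
    (c := (Fintype.card ι₂ : ℝ) ^ (p - 1)) (by positivity)
  have reduced := (hasSubgradientOn_re_trace_rpow (n := ι₁) hp1).comp
    (L := (ptraceLinearMap (ι₂ := ι₂)).restrictScalars ℝ) fun ρ (hρ : ρ.PosDef) => posDef_ptrace hρ
  refine (total.sub reduced convex_posDef fun σ hσ ρ hρ => ?_).convexOn convex_posDef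
  have monotone := mul_le_mul_of_nonneg_left
    (re_trace_rpow_ptrace_sub_mul_sub_le hρ hσ (sub_nonneg.2 hp1) (by linarith))
    (zero_le_one.trans hp1)
  rw [← ptrace_sub, mul_left_comm, ← reTraceMul_apply, ← reTraceMul_apply, reTraceMul_sub,
    reTraceMul_sub] at monotone
  simp only [LinearMap.sub_apply, LinearMap.smul_apply, smul_eq_mul, mul_sub] at monotone ⊢
  exact monotone
end
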